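/- arXiv:0711.2820 — 2 statements merged into one kernel-verified Lean document; each statement's English description precedes it below -/
import Mathlib

section
/- (Kozyrev's wavelet basis.) For ν = 1,…,p−1 define ψ^{(ν)}(x) = χ_p((ν/p)x) Ω(|x|_p), x ∈ ℚ_p. Then the system {p^{j/2} ψ^{(ν)}(p^{−j}x − a) : j ∈ ℤ, a ∈ I_p, ν = 1,…,p−1} is an orthonormal basis of L²(ℚ_p). -/
open MeasureTheory Metric

noncomputable section

variable {p : ℕ} [Fact p.Prime]

instance : MeasurableSpace ℚ_[p] := borel _
instance : BorelSpace ℚ_[p] := ⟨rfl⟩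

/-- `I_p`: the set of `p`-adic fractional parts, i.e. numbers `a / p^γ` with
`0 ≤ a < p^γ` (in particular `0 ∈ I_p`). -/
def Ip (p : ℕ) [Fact p.Prime] : Set ℚ_[p] :=
  {x | ∃ γ a : ℕ, a < p ^ γ ∧ x = (a : ℚ_[p]) / (p : ℚ_[p]) ^ γ}

/-- The `p`-adic fractional part `{x}_p` of `x ∈ ℚ_p` (as a rational number). -/
def padicFrac {p : ℕ} [Fact p.Prime] (x : ℚ_[p]) : ℚ :=
  let γ : ℕ := (-x.valuation).toNat
  if h : ‖x * (p : ℚ_[p]) ^ γ‖ ≤ 1 then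
    (PadicInt.appr (⟨x * (p : ℚ_[p]) ^ γ, h⟩ : ℤ_[p]) γ : ℚ) / (p : ℚ) ^ γ
  else 0

/-- The standard additive character `χ_p(x) = exp(2πi {x}_p)` of `ℚ_p`. -/
def padicChar {p : ℕ} [Fact p.Prime] (x : ℚ_[p]) : ℂ :=
  Complex.exp (2 * Real.pi * Complex.I * (padicFrac x : ℂ))

/-- `Ω : [0,∞) → ℝ`, `Ω(t) = 1` for `t ∈ [0,1]`, `Ω(t) = 0` otherwise. -/
def Omega : ℝ → ℝ := Set.indicator (Set.Icc 0 1) fun _ => 1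

namespace Kozyrev

lemma p_pos : (0:ℝ) < p := by exact_mod_cast (Fact.out : p.Prime).pos

lemma p_one_lt : (1:ℝ) < p := by exact_mod_cast (Fact.out : p.Prime).one_lt

lemma p_ne : (p : ℚ_[p]) ≠ 0 := by exact_mod_cast (Fact.out : p.Prime).ne_zero

/-- An element of `ℤ[1/p] ∩ ℤ_p` is an integer. -/
lemma int_of_norm_le (q : ℚ) (a : ℤ) (n : ℕ) (hq : q = a / (p:ℚ) ^ n)
    (h : ‖(q : ℚ_[p])‖ ≤ 1) : ∃ z : ℤ, q = z := by
  have hp0 : (p:ℚ) ^ n ≠ 0 := pow_ne_zero _ (by exact_mod_cast (Fact.out : p.Prime).ne_zero)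
  have h1 : ‖(a : ℚ_[p])‖ ≤ (p:ℝ) ^ (-n : ℤ) := by
    have : (a : ℚ_[p]) = (q : ℚ_[p]) * (p : ℚ_[p]) ^ n := by
      have : (a : ℚ) = q * (p:ℚ) ^ n := by rw [hq]; field_simp
      exact_mod_cast congrArg (fun t : ℚ => (t : ℚ_[p])) this
    rw [this, norm_mul, Padic.norm_p_pow]
    have : (0:ℝ) < (p:ℝ) ^ (-n : ℤ) := zpow_pos p_pos _
    nlinarith
  rw [Padic.norm_int_le_pow_iff_dvd] at h1
  obtain ⟨z, rfl⟩ := h1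
  refine ⟨z, ?_⟩
  rw [hq]; push_cast; field_simp

lemma frac_spec (x : ℚ_[p]) : ‖x - (padicFrac x : ℚ_[p])‖ ≤ 1 ∧
    ∃ (a : ℤ) (n : ℕ), padicFrac x = a / (p:ℚ) ^ n := by
  unfold padicFrac
  set γ : ℕ := (-x.valuation).toNat with hγ
  have h : ‖x * (p : ℚ_[p]) ^ γ‖ ≤ 1 := by
    by_cases hx : x = 0
    · simp [hx]
    · rw [norm_mul, Padic.norm_eq_zpow_neg_valuation hx, Padic.norm_p_pow,
        ← zpow_add₀ p_pos.ne']
      exact zpow_le_one_of_nonpos₀ p_one_lt.le (by omega)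
  rw [dif_pos h]
  refine ⟨?_, ⟨((PadicInt.appr ⟨x * (p : ℚ_[p]) ^ γ, h⟩ γ : ℕ) : ℤ), γ, by rw [Int.cast_natCast]⟩⟩
  set y : ℤ_[p] := ⟨x * (p : ℚ_[p]) ^ γ, h⟩ with hy
  have h1 := (PadicInt.norm_le_pow_iff_mem_span_pow (y - (y.appr γ : ℤ_[p])) γ).2
    (PadicInt.appr_spec γ y)
  rw [PadicInt.norm_def] at h1
  have hpg : (p : ℚ_[p]) ^ γ ≠ 0 := pow_ne_zero _ p_ne
  have h2 : x - (((y.appr γ : ℚ) / (p:ℚ) ^ γ : ℚ) : ℚ_[p]) =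
      ((y - (y.appr γ : ℤ_[p]) : ℤ_[p]) : ℚ_[p]) * ((p : ℚ_[p]) ^ γ)⁻¹ := by
    push_cast
    rw [hy]
    field_simp
  rw [h2, norm_mul, norm_inv, Padic.norm_p_pow]
  have h3 : (0:ℝ) < (p:ℝ) ^ (-γ : ℤ) := zpow_pos p_pos _
  exact mul_inv_le_one_of_le₀ h1 h3.le

lemma exp_int_eq (q r : ℚ) (z : ℤ) (h : q = r + z) :
    Complex.exp (2 * Real.pi * Complex.I * (q : ℂ)) =
      Complex.exp (2 * Real.pi * Complex.I * (r : ℂ)) := by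
  rw [Complex.exp_eq_exp_iff_exists_int]
  refine ⟨z, ?_⟩
  rw [h]; push_cast; ring

lemma char_add (x y : ℚ_[p]) : padicChar (x + y) = padicChar x * padicChar y := by
  obtain ⟨hx, a, n, ha⟩ := frac_spec x
  obtain ⟨hy, b, m, hb⟩ := frac_spec y
  obtain ⟨hz, c, k, hc⟩ := frac_spec (x + y)
  have hp0 : (p:ℚ) ≠ 0 := by exact_mod_cast (Fact.out : p.Prime).ne_zero
  obtain ⟨z, hz⟩ := int_of_norm_le (p := p) (padicFrac (x + y) - (padicFrac x + padicFrac y))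
    (c * p ^ (n + m) - (a * p ^ (m + k) + b * p ^ (n + k))) (n + m + k)
    (by rw [ha, hb, hc]; push_cast; field_simp; ring) (by
      have : ((padicFrac (x + y) - (padicFrac x + padicFrac y) : ℚ) : ℚ_[p]) =
        (x - (padicFrac x : ℚ_[p])) + (y - (padicFrac y : ℚ_[p])) -
          (x + y - (padicFrac (x+y) : ℚ_[p])) := by push_cast; ring
      rw [this, sub_eq_add_neg]
      refine (IsUltrametricDist.norm_add_le_max _ _).trans (max_le ?_ (by rwa [norm_neg]))
      exact (IsUltrametricDist.norm_add_le_max _ _).trans (max_le hx hy))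
  unfold padicChar
  rw [← Complex.exp_add, exp_int_eq (padicFrac (x+y)) (padicFrac x + padicFrac y) z
    (by linarith)]
  push_cast; ring_nf

lemma char_eq_one_iff (x : ℚ_[p]) : padicChar x = 1 ↔ ‖x‖ ≤ 1 := by
  obtain ⟨hx, a, n, ha⟩ := frac_spec x
  constructor
  · intro h
    unfold padicChar at h
    rw [Complex.exp_eq_one_iff] at h
    obtain ⟨z, hz⟩ := h
    have h2 : (padicFrac x : ℂ) = (z : ℂ) := by
      have h0 : (2 * Real.pi * Complex.I : ℂ) ≠ 0 := Complex.two_pi_I_ne_zero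
      apply mul_left_cancel₀ h0
      rw [hz]; ring
    have h3 : padicFrac x = (z : ℚ) := by exact_mod_cast h2
    rw [h3] at hx
    have : x = (x - ((z : ℚ) : ℚ_[p])) + (z : ℚ_[p]) := by push_cast; ring
    rw [this]
    exact (IsUltrametricDist.norm_add_le_max _ _).trans (max_le hx (Padic.norm_int_le_one z))
  · intro h
    obtain ⟨z, hz⟩ := int_of_norm_le (padicFrac x) a n ha (by
      have : (padicFrac x : ℚ_[p]) = x - (x - (padicFrac x : ℚ_[p])) := by ring
      rw [this, sub_eq_add_neg]
      exact (IsUltrametricDist.norm_add_le_max _ _).trans (max_le h (by rwa [norm_neg])))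
    unfold padicChar
    rw [exp_int_eq (padicFrac x) 0 z (by rw [hz]; ring)]
    simp

lemma char_zero : padicChar (0 : ℚ_[p]) = 1 := (char_eq_one_iff _).2 (by simp)

lemma char_ne_zero (x : ℚ_[p]) : padicChar x ≠ 0 := Complex.exp_ne_zero _

lemma norm_char (x : ℚ_[p]) : ‖padicChar x‖ = 1 := by
  unfold padicChar
  have : (2 * Real.pi * Complex.I * (padicFrac x : ℂ)) =
    ((2 * Real.pi * (padicFrac x : ℝ) : ℝ) : ℂ) * Complex.I := by push_cast; ring
  rw [this, Complex.norm_exp_ofReal_mul_I]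

lemma char_neg (x : ℚ_[p]) : padicChar (-x) = (padicChar x)⁻¹ := by
  apply eq_inv_of_mul_eq_one_left
  rw [← char_add, neg_add_cancel, char_zero]

lemma conj_char (x : ℚ_[p]) : (starRingEnd ℂ) (padicChar x) = padicChar (-x) := by
  rw [char_neg, Complex.inv_eq_conj (norm_char x)]

lemma char_nat_mul (n : ℕ) (x : ℚ_[p]) : padicChar ((n : ℚ_[p]) * x) = padicChar x ^ n := by
  induction n with
  | zero => simp [char_zero]
  | succ n ih => push_cast; rw [add_mul, one_mul, char_add, ih, pow_succ]

lemma char_continuous : Continuous (padicChar : ℚ_[p] → ℂ) := by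
  rw [continuous_iff_continuousAt]
  intro x
  apply ContinuousAt.congr (continuousAt_const (y := padicChar x))
  filter_upwards [closedBall_mem_nhds x one_pos] with y hy
  rw [mem_closedBall, dist_eq_norm] at hy
  have : y = x + (y - x) := by ring
  rw [this, char_add, (char_eq_one_iff (y - x)).2 hy, mul_one]

/-- Sum of characters over `ν = 0, …, p-1`. -/
lemma char_sum (y : ℚ_[p]) (hy : ‖y‖ ≤ 1) :
    ∑ ν ∈ Finset.range p, padicChar ((ν : ℚ_[p]) / (p : ℚ_[p]) * y) =
      if ‖y‖ ≤ (p:ℝ)⁻¹ then (p : ℂ) else 0 := by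
  have e : ∀ ν : ℕ, padicChar ((ν : ℚ_[p]) / (p : ℚ_[p]) * y) = padicChar (y / (p : ℚ_[p])) ^ ν := by
    intro ν; rw [← char_nat_mul]; congr 1; ring
  simp_rw [e]
  have key : padicChar (y / (p : ℚ_[p])) = 1 ↔ ‖y‖ ≤ (p:ℝ)⁻¹ := by
    rw [char_eq_one_iff, norm_div, Padic.norm_p, div_le_one (inv_pos.2 p_pos)]
  split_ifs with h
  · rw [key.2 h]; simp
  · rw [geom_sum_eq (fun h' => h (key.1 h'))]
    rw [← char_nat_mul, mul_div_cancel₀ _ p_ne, (char_eq_one_iff y).2 hy]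
    simp

/-- Unnormalised wavelet centred at `c`. -/
def W (j : ℤ) (c : ℚ_[p]) (ν : ℕ) : ℚ_[p] → ℂ :=
  (closedBall c ((p:ℝ) ^ (-j))).indicator
    (fun x => padicChar ((ν : ℚ_[p]) / (p : ℚ_[p]) * ((p : ℚ_[p]) ^ (-j) * (x - c))))

lemma r_pos (j : ℤ) : (0:ℝ) < (p:ℝ) ^ j := zpow_pos p_pos _

lemma norm_scale_le (j : ℤ) (h : ℚ_[p]) :
    ‖(p : ℚ_[p]) ^ (-j) * h‖ ≤ 1 ↔ ‖h‖ ≤ (p:ℝ) ^ (-j) := by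
  rw [norm_mul, Padic.norm_p_zpow, neg_neg, zpow_neg, ← one_div, le_div_iff₀ (r_pos j), mul_comm]

lemma mem_ball_iff (j : ℤ) (c x : ℚ_[p]) :
    x ∈ closedBall c ((p:ℝ) ^ (-j)) ↔ ‖(p : ℚ_[p]) ^ (-j) * (x - c)‖ ≤ 1 := by
  rw [norm_scale_le, mem_closedBall, dist_eq_norm]

lemma W_shift (j : ℤ) (c : ℚ_[p]) (ν : ℕ) (h : ℚ_[p]) (hh : ‖h‖ ≤ (p:ℝ) ^ (-j)) (x : ℚ_[p]) :
    W j c ν (x + h) = padicChar ((ν : ℚ_[p]) / (p : ℚ_[p]) * ((p : ℚ_[p]) ^ (-j) * h)) * W j c ν x := by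
  have hm : x + h ∈ closedBall c ((p:ℝ) ^ (-j)) ↔ x ∈ closedBall c ((p:ℝ) ^ (-j)) := by
    have : x + h ∈ closedBall x ((p:ℝ) ^ (-j)) := by simpa [mem_closedBall, dist_eq_norm] using hh
    have e := IsUltrametricDist.closedBall_eq_of_mem this
    rw [mem_closedBall_comm, ← e, mem_closedBall_comm]
  unfold W
  by_cases hx : x ∈ closedBall c ((p:ℝ) ^ (-j))
  · rw [Set.indicator_of_mem hx, Set.indicator_of_mem (hm.2 hx), ← char_add]
    congr 1; ring
  · rw [Set.indicator_of_notMem hx, Set.indicator_of_notMem (mt hm.1 hx), mul_zero]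

lemma W_center (j : ℤ) (c c' : ℚ_[p]) (ν : ℕ) (hh : ‖c - c'‖ ≤ (p:ℝ) ^ (-j)) (x : ℚ_[p]) :
    W j c' ν x = padicChar ((ν : ℚ_[p]) / (p : ℚ_[p]) * ((p : ℚ_[p]) ^ (-j) * (c - c'))) * W j c ν x := by
  have : c ∈ closedBall c' ((p:ℝ) ^ (-j)) := by simpa [mem_closedBall, dist_eq_norm] using hh
  have e := IsUltrametricDist.closedBall_eq_of_mem this
  unfold W
  rw [e]
  by_cases hx : x ∈ closedBall c ((p:ℝ) ^ (-j))
  · rw [Set.indicator_of_mem hx, Set.indicator_of_mem hx, ← char_add]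
    congr 1; ring
  · rw [Set.indicator_of_notMem hx, Set.indicator_of_notMem hx, mul_zero]

lemma W_zero (j : ℤ) (c : ℚ_[p]) :
    W j c 0 = (closedBall c ((p:ℝ) ^ (-j))).indicator (fun _ => (1:ℂ)) := by
  unfold W; simp [char_zero]

lemma W_sum (j : ℤ) (c x : ℚ_[p]) :
    ∑ ν ∈ Finset.range p, W j c ν x = (p : ℂ) * W (j+1) c 0 x := by
  classical
  rw [W_zero]
  by_cases hx : x ∈ closedBall c ((p:ℝ) ^ (-j))
  · have hx' := (mem_ball_iff _ _ _).1 hx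
    have := char_sum _ hx'
    unfold W
    simp_rw [Set.indicator_of_mem hx]
    rw [this, Set.indicator_apply]
    have e : ‖(p : ℚ_[p]) ^ (-j) * (x - c)‖ ≤ (p:ℝ)⁻¹ ↔
        x ∈ closedBall c ((p:ℝ) ^ (-(j+1))) := by
      rw [mem_ball_iff, neg_add, zpow_add₀ p_ne, mul_comm _ ((p:ℚ_[p])^(-1:ℤ)), mul_assoc,
        norm_mul ((p:ℚ_[p])^(-1:ℤ)), Padic.norm_p_zpow, neg_neg, zpow_one, ← one_div,
        le_div_iff₀ p_pos, mul_comm]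
    simp only [e]
    split_ifs <;> simp only [mul_one, mul_zero]
  · have hx2 : x ∉ closedBall c ((p:ℝ) ^ (-(j+1))) := fun h => hx
      (closedBall_subset_closedBall (zpow_le_zpow_right₀ p_one_lt.le (by omega)) h)
    unfold W
    simp_rw [Set.indicator_of_notMem hx]
    rw [Set.indicator_of_notMem hx2]; simp

lemma W_measurable (j : ℤ) (c : ℚ_[p]) (ν : ℕ) : Measurable (W j c ν) := by
  unfold W
  apply Measurable.indicator _ measurableSet_closedBall
  exact (char_continuous.comp (by fun_prop)).measurable

lemma norm_W (j : ℤ) (c : ℚ_[p]) (ν : ℕ) (x : ℚ_[p]) :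
    ‖W j c ν x‖ = ‖(closedBall c ((p:ℝ) ^ (-j))).indicator (fun _ => (1:ℂ)) x‖ := by
  unfold W
  by_cases hx : x ∈ closedBall c ((p:ℝ) ^ (-j))
  · rw [Set.indicator_of_mem hx, Set.indicator_of_mem hx, norm_char]; simp
  · rw [Set.indicator_of_notMem hx, Set.indicator_of_notMem hx]

lemma W_memLp (μ : Measure ℚ_[p]) [μ.IsAddHaarMeasure] (q : ENNReal)
    (j : ℤ) (c : ℚ_[p]) (ν : ℕ) : MemLp (W j c ν) q μ := by
  have : MemLp ((closedBall c ((p:ℝ) ^ (-j))).indicator (fun _ => (1:ℂ))) q μ :=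
    memLp_indicator_const q measurableSet_closedBall 1
      (Or.inr (isCompact_closedBall _ _).measure_lt_top.ne)
  exact this.of_le (W_measurable j c ν).aestronglyMeasurable
    (Filter.Eventually.of_forall fun x => (norm_W j c ν x).le)

lemma integral_eq_zero_of_shift (μ : Measure ℚ_[p]) [μ.IsAddHaarMeasure] (F : ℚ_[p] → ℂ)
    (h : ℚ_[p]) (k : ℂ) (hk : k ≠ 1) (hF : ∀ x, F (x + h) = k * F x) : ∫ x, F x ∂μ = 0 := by
  have h1 := integral_add_right_eq_self (μ := μ) F h
  simp_rw [hF, integral_const_mul] at h1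
  have : (k - 1) * ∫ x, F x ∂μ = 0 := by rw [sub_mul, h1]; ring
  exact (mul_eq_zero.1 this).resolve_left (sub_ne_zero.2 hk)

lemma char_frac_ne (m : ℤ) (hm : ¬ (p : ℤ) ∣ m) : padicChar ((m : ℚ_[p]) / (p : ℚ_[p])) ≠ 1 := by
  rw [Ne, char_eq_one_iff, norm_div, Padic.norm_p, div_le_one (inv_pos.2 p_pos)]
  have := Padic.norm_int_le_pow_iff_dvd (p := p) m 1
  simp at this
  rwa [this]

lemma not_dvd_nat (ν : ℕ) (h1 : 1 ≤ ν) (h2 : ν < p) : ¬ (p : ℤ) ∣ (ν : ℤ) := by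
  intro h
  have := Int.le_of_dvd (by omega) h
  omega

lemma norm_zpow_self (j : ℤ) : ‖(p : ℚ_[p]) ^ j‖ ≤ (p:ℝ) ^ (-j) := by
  rw [Padic.norm_p_zpow]

lemma scale_self (j : ℤ) : (p : ℚ_[p]) ^ (-j) * (p : ℚ_[p]) ^ j = 1 := by
  rw [← zpow_add₀ p_ne]; simp

lemma integral_W (μ : Measure ℚ_[p]) [μ.IsAddHaarMeasure] (j : ℤ) (c : ℚ_[p]) (ν : ℕ)
    (h1 : 1 ≤ ν) (h2 : ν < p) : ∫ x, W j c ν x ∂μ = 0 := by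
  refine integral_eq_zero_of_shift μ _ ((p:ℚ_[p]) ^ j) (padicChar (((ν:ℤ) : ℚ_[p]) / (p : ℚ_[p])))
    (char_frac_ne _ (not_dvd_nat ν h1 h2)) (fun x => ?_)
  rw [W_shift j c ν _ (norm_zpow_self j), scale_self]; simp

lemma real_ball_succ (μ : Measure ℚ_[p]) [μ.IsAddHaarMeasure] (j : ℤ) (c : ℚ_[p]) :
    μ.real (closedBall c ((p:ℝ) ^ (-j))) = p * μ.real (closedBall c ((p:ℝ) ^ (-(j+1)))) := by
  have hz : ∀ j, ∫ x, W j c 0 x ∂μ = (μ.real (closedBall c ((p:ℝ) ^ (-j))) : ℂ) := by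
    intro j
    rw [W_zero, integral_indicator_const _ measurableSet_closedBall]; simp
  have h := integral_congr_ae (μ := μ) (Filter.Eventually.of_forall (W_sum j c))
  rw [integral_finsetSum _ (fun ν _ => memLp_one_iff_integrable.1 (W_memLp μ 1 j c ν)),
    integral_const_mul, hz, Finset.sum_eq_single 0, hz] at h
  · exact_mod_cast h
  · intro ν hν h0
    exact integral_W μ j c ν (by omega) (Finset.mem_range.1 hν)
  · intro h'
    exact absurd (Finset.mem_range.2 (Fact.out : p.Prime).pos) h'

lemma real_ball (μ : Measure ℚ_[p]) [μ.IsAddHaarMeasure] (hμ : μ (closedBall 0 1) = 1)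
    (j : ℤ) (c : ℚ_[p]) : μ.real (closedBall c ((p:ℝ) ^ (-j))) = (p:ℝ) ^ (-j) := by
  have hc : μ.real (closedBall c ((p:ℝ) ^ (-j))) = μ.real (closedBall 0 ((p:ℝ) ^ (-j))) := by
    unfold Measure.real
    rw [Measure.addHaar_closedBall_center]
  rw [hc]
  induction j using Int.induction_on with
  | zero => simp [Measure.real, hμ]
  | succ i ih =>
    have := real_ball_succ μ i (0 : ℚ_[p])
    rw [ih (by unfold Measure.real; rw [Measure.addHaar_closedBall_center])] at this
    have e : (p:ℝ) ^ (-((i:ℤ)+1)) = (p:ℝ) ^ (-(i:ℤ)) * (p:ℝ)⁻¹ := by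
      rw [neg_add, zpow_add₀ p_pos.ne', zpow_neg_one]
    have h0 := (p_pos (p := p)).ne'
    refine mul_left_cancel₀ h0 ?_
    rw [← this, e]
    field_simp
  | pred i ih =>
    have := real_ball_succ μ (-i - 1) (0 : ℚ_[p])
    rw [sub_add_cancel, ih (by unfold Measure.real; rw [Measure.addHaar_closedBall_center])] at this
    rw [this, neg_sub, sub_eq_add_neg, zpow_add₀ p_pos.ne']
    simp

/-- Shifts by elements of smaller balls do not change the wavelet. -/
lemma W_shift_small (j j' : ℤ) (hj : j < j') (c : ℚ_[p]) (ν : ℕ) (x : ℚ_[p]) :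
    W j c ν (x + (p:ℚ_[p]) ^ j') = W j c ν x := by
  have hle : (p:ℝ) ^ (-j') ≤ (p:ℝ) ^ (-j) := zpow_le_zpow_right₀ p_one_lt.le (by omega)
  rw [W_shift j c ν _ ((norm_zpow_self j').trans hle)]
  rw [(char_eq_one_iff _).2, one_mul]
  have e : (ν : ℚ_[p]) / (p:ℚ_[p]) * ((p:ℚ_[p]) ^ (-j) * (p:ℚ_[p]) ^ j') =
      ((ν : ℤ) : ℚ_[p]) * (p:ℚ_[p]) ^ (-1 + -j + j') := by
    rw [zpow_add₀ p_ne, zpow_add₀ p_ne, zpow_neg_one]; push_cast; ring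
  rw [e, norm_mul, Padic.norm_p_zpow]
  refine mul_le_one₀ (Padic.norm_int_le_one _) (r_pos _).le ?_
  exact zpow_le_one_of_nonpos₀ p_one_lt.le (by omega)

lemma W_shift_self (j : ℤ) (c : ℚ_[p]) (ν : ℕ) (x : ℚ_[p]) :
    W j c ν (x + (p:ℚ_[p]) ^ j) = padicChar (((ν : ℤ) : ℚ_[p]) / (p:ℚ_[p])) * W j c ν x := by
  rw [W_shift j c ν _ (norm_zpow_self j), scale_self]; simp

lemma W_orth (μ : Measure ℚ_[p]) [μ.IsAddHaarMeasure] (j j' : ℤ) (c c' : ℚ_[p]) (ν ν' : ℕ)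
    (h1 : 1 ≤ ν) (h2 : ν < p) (h1' : 1 ≤ ν') (h2' : ν' < p) (hne : j ≠ j' ∨ ν ≠ ν') :
    ∫ x, W j' c' ν' x * (starRingEnd ℂ) (W j c ν x) ∂μ = 0 := by
  rcases lt_trichotomy j j' with hj | hj | hj
  · refine integral_eq_zero_of_shift μ _ ((p:ℚ_[p]) ^ j')
      (padicChar (((ν' : ℤ) : ℚ_[p]) / (p:ℚ_[p])))
      (char_frac_ne _ (not_dvd_nat ν' h1' h2')) (fun x => ?_)
    rw [W_shift_small j j' hj, W_shift_self]; ring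
  · subst hj
    refine integral_eq_zero_of_shift μ _ ((p:ℚ_[p]) ^ j)
      (padicChar (((ν' - ν : ℤ) : ℚ_[p]) / (p:ℚ_[p])))
      (char_frac_ne _ ?_) (fun x => ?_)
    · intro h
      have h0 : (ν' - ν : ℤ) ≠ 0 := by omega
      have := Int.le_of_dvd (abs_pos.2 h0) ((dvd_abs _ _).2 h)
      rcases abs_cases (ν' - ν : ℤ) with h | h <;> omega
    · rw [W_shift_self, W_shift_self, map_mul, conj_char]
      have e : (((ν' - ν : ℤ) : ℚ_[p]) / (p:ℚ_[p])) =
        ((ν' : ℤ) : ℚ_[p]) / (p:ℚ_[p]) + -(((ν : ℤ) : ℚ_[p]) / (p:ℚ_[p])) := by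
        push_cast; ring
      rw [e, char_add]; ring
  · refine integral_eq_zero_of_shift μ _ ((p:ℚ_[p]) ^ j)
      ((padicChar (((ν : ℤ) : ℚ_[p]) / (p:ℚ_[p])))⁻¹)
      (fun h => char_frac_ne _ (not_dvd_nat ν h1 h2) (inv_eq_one.1 h)) (fun x => ?_)
    rw [W_shift_small j' j hj, W_shift_self, map_mul, conj_char, char_neg]; ring

lemma Ip_eq (a b : ℚ_[p]) (ha : a ∈ Ip p) (hb : b ∈ Ip p) (h : ‖a - b‖ ≤ 1) : a = b := by
  obtain ⟨n, k, hk, rfl⟩ := ha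
  obtain ⟨m, l, hl, rfl⟩ := hb
  have hp : 0 < (p:ℚ) := by exact_mod_cast (Fact.out : p.Prime).pos
  obtain ⟨z, hz⟩ := int_of_norm_le (p := p) ((k:ℚ) / (p:ℚ) ^ n - (l:ℚ) / (p:ℚ) ^ m)
    (k * p ^ m - l * p ^ n) (n + m) (by push_cast; field_simp; ring) (by push_cast; exact h)
  have b1 : (k:ℚ) / (p:ℚ) ^ n < 1 := by
    rw [div_lt_one (pow_pos hp _)]; exact_mod_cast hk
  have b2 : (l:ℚ) / (p:ℚ) ^ m < 1 := by
    rw [div_lt_one (pow_pos hp _)]; exact_mod_cast hl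
  have b3 : 0 ≤ (k:ℚ) / (p:ℚ) ^ n := by positivity
  have b4 : 0 ≤ (l:ℚ) / (p:ℚ) ^ m := by positivity
  have z1 : z < 1 := by
    have : (z:ℚ) < 1 := by rw [← hz]; linarith
    exact_mod_cast this
  have z2 : -1 < z := by
    have : (-1:ℚ) < z := by rw [← hz]; linarith
    exact_mod_cast this
  have z0 : z = 0 := by omega
  rw [z0, Int.cast_zero, sub_eq_zero] at hz
  have h5 := congrArg (fun t : ℚ => (t : ℚ_[p])) hz
  push_cast at h5
  exact h5

lemma Ip_exists (x : ℚ_[p]) : ∃ a ∈ Ip p, ‖x - a‖ ≤ 1 := by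
  refine ⟨(padicFrac x : ℚ_[p]), ?_, (frac_spec x).1⟩
  unfold padicFrac
  simp only
  split_ifs with h
  · exact ⟨_, _, PadicInt.appr_lt _ _, by push_cast; rfl⟩
  · exact ⟨0, 0, by simp, by simp⟩

lemma W_disjoint (j : ℤ) (a a' : ℚ_[p]) (ha : a ∈ Ip p) (ha' : a' ∈ Ip p) (hne : a ≠ a')
    (ν ν' : ℕ) (x : ℚ_[p]) :
    W j ((p:ℚ_[p]) ^ j * a') ν' x * (starRingEnd ℂ) (W j ((p:ℚ_[p]) ^ j * a) ν x) = 0 := by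
  by_cases hx : x ∈ closedBall ((p:ℚ_[p]) ^ j * a) ((p:ℝ) ^ (-j))
  · by_cases hx' : x ∈ closedBall ((p:ℚ_[p]) ^ j * a') ((p:ℝ) ^ (-j))
    · exfalso
      apply hne
      apply Ip_eq a a' ha ha'
      rw [mem_ball_iff] at hx hx'
      have e : a - a' = (p:ℚ_[p]) ^ (-j) * (x - (p:ℚ_[p]) ^ j * a') +
          -((p:ℚ_[p]) ^ (-j) * (x - (p:ℚ_[p]) ^ j * a)) := by
        linear_combination (-(a - a')) * scale_self (p := p) j
      rw [e]
      exact (IsUltrametricDist.norm_add_le_max _ _).trans (max_le hx' (by rwa [norm_neg]))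
    · unfold W; rw [Set.indicator_of_notMem hx', zero_mul]
  · unfold W; rw [Set.indicator_of_notMem hx, map_zero, mul_zero]

lemma W_self (μ : Measure ℚ_[p]) [μ.IsAddHaarMeasure] (hμ : μ (closedBall 0 1) = 1)
    (j : ℤ) (c : ℚ_[p]) (ν : ℕ) :
    ∫ x, W j c ν x * (starRingEnd ℂ) (W j c ν x) ∂μ = (((p:ℝ) ^ (-j) : ℝ) : ℂ) := by
  have : ∀ x, W j c ν x * (starRingEnd ℂ) (W j c ν x) =
      (closedBall c ((p:ℝ) ^ (-j))).indicator (fun _ => (1:ℂ)) x := by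
    intro x
    rw [Complex.mul_conj', norm_W]
    by_cases hx : x ∈ closedBall c ((p:ℝ) ^ (-j))
    · rw [Set.indicator_of_mem hx]; simp
    · rw [Set.indicator_of_notMem hx]; simp
  simp_rw [this]
  rw [integral_indicator_const _ measurableSet_closedBall, real_ball μ hμ]
  simp

/-- The wavelet as an element of `L²`. -/
def V (μ : Measure ℚ_[p]) [μ.IsAddHaarMeasure] (j : ℤ) (c : ℚ_[p]) (ν : ℕ) : Lp ℂ 2 μ :=
  (W_memLp μ 2 j c ν).toLp

lemma inner_V (μ : Measure ℚ_[p]) [μ.IsAddHaarMeasure] (j j' : ℤ) (c c' : ℚ_[p]) (ν ν' : ℕ) :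
    inner ℂ (V μ j c ν) (V μ j' c' ν') =
      ∫ x, W j' c' ν' x * (starRingEnd ℂ) (W j c ν x) ∂μ := by
  rw [L2.inner_def]
  apply integral_congr_ae
  filter_upwards [(W_memLp μ 2 j c ν).coeFn_toLp, (W_memLp μ 2 j' c' ν').coeFn_toLp] with x h1 h2
  simp only [V]
  rw [h1, h2]; rfl

lemma V_center (μ : Measure ℚ_[p]) [μ.IsAddHaarMeasure] (j : ℤ) (c c' : ℚ_[p]) (ν : ℕ)
    (hh : ‖c - c'‖ ≤ (p:ℝ) ^ (-j)) : ∃ k : ℂ, V μ j c' ν = k • V μ j c ν := by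
  refine ⟨padicChar ((ν : ℚ_[p]) / (p:ℚ_[p]) * ((p : ℚ_[p]) ^ (-j) * (c - c'))), ?_⟩
  unfold V
  rw [← MemLp.toLp_const_smul, MemLp.toLp_eq_toLp_iff]
  exact Filter.Eventually.of_forall fun x => by
    simpa using W_center j c c' ν hh x

lemma V_sum (μ : Measure ℚ_[p]) [μ.IsAddHaarMeasure] (j : ℤ) (c : ℚ_[p]) :
    ∑ ν ∈ Finset.range p, V μ j c ν = (p : ℂ) • V μ (j+1) c 0 := by
  unfold V
  rw [← MemLp.toLp_const_smul]
  apply Lp.ext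
  refine Filter.EventuallyEq.trans ?_ (MemLp.coeFn_toLp _).symm
  refine (Lp.coeFn_finsetSum _ _).trans ?_
  have h : ∀ᵐ x ∂μ, ∀ ν : ℕ, ((W_memLp μ 2 j c ν).toLp : Lp ℂ 2 μ) x = W j c ν x := by
    rw [ae_all_iff]
    intro ν
    exact (W_memLp μ 2 j c ν).coeFn_toLp
  filter_upwards [h] with x hx
  simp only [Finset.sum_apply, hx, Pi.smul_apply, smul_eq_mul]
  exact W_sum j c x

lemma norm_V_zero (μ : Measure ℚ_[p]) [μ.IsAddHaarMeasure] (hμ : μ (closedBall 0 1) = 1)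
    (j : ℤ) (c : ℚ_[p]) (ν : ℕ) : ‖V μ j c ν‖ ^ 2 = (p:ℝ) ^ (-j) := by
  have h := inner_self_eq_norm_sq_to_K (𝕜 := ℂ) (V μ j c ν)
  rw [inner_V, W_self μ hμ] at h
  have h' := h.symm
  rw [← RCLike.ofReal_pow] at h'
  exact RCLike.ofReal_injective h'

lemma inner_V_zero (μ : Measure ℚ_[p]) [μ.IsAddHaarMeasure] (j : ℤ) (c : ℚ_[p])
    (g : Lp ℂ 2 μ) : inner ℂ (V μ j c 0) g = ∫ x in closedBall c ((p:ℝ) ^ (-j)), g x ∂μ := by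
  rw [← L2.inner_indicatorConstLp_one measurableSet_closedBall
    (isCompact_closedBall _ _).measure_lt_top.ne g]
  congr 1
  unfold V indicatorConstLp
  rw [MemLp.toLp_eq_toLp_iff, W_zero]

/-- If `g` is orthogonal to all wavelets, its integral over every ball vanishes. -/
lemma ball_zero (μ : Measure ℚ_[p]) [μ.IsAddHaarMeasure] (hμ : μ (closedBall 0 1) = 1)
    (g : Lp ℂ 2 μ) (hg : ∀ (j : ℤ) (c : ℚ_[p]) (ν : ℕ), 1 ≤ ν → ν < p → inner ℂ (V μ j c ν) g = 0)
    (j : ℤ) (c : ℚ_[p]) : inner ℂ (V μ j c 0) g = 0 := by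
  have step : ∀ j, inner ℂ (V μ j c 0) g = (p:ℂ) * inner ℂ (V μ (j+1) c 0) g := by
    intro j
    have h := congrArg (fun t => inner ℂ t g) (V_sum μ j c)
    simp only [sum_inner, inner_smul_left] at h
    rw [Finset.sum_eq_single 0] at h
    · simpa using h
    · intro ν hν h0
      exact hg j c ν (by omega) (Finset.mem_range.1 hν)
    · intro h'
      exact absurd (Finset.mem_range.2 (Fact.out : p.Prime).pos) h'
  have hn : ∀ n : ℕ, inner ℂ (V μ (j - n) c 0) g = (p:ℂ) ^ n * inner ℂ (V μ j c 0) g := by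
    intro n
    induction n with
    | zero => simp
    | succ n ih =>
      rw [step]
      have : (j - ((n + 1 : ℕ) : ℤ) + 1) = j - n := by push_cast; ring
      rw [this, ih]; ring
  by_contra hne
  have hpos : 0 < ‖inner ℂ (V μ j c 0) g‖ ^ 2 := by positivity
  have hb : ∀ n : ℕ, (p:ℝ) ^ n * ‖inner ℂ (V μ j c 0) g‖ ^ 2 ≤ (p:ℝ) ^ (-j) * ‖g‖ ^ 2 := by
    intro n
    have h1 := norm_inner_le_norm (𝕜 := ℂ) (V μ (j - n) c 0) g
    rw [hn] at h1
    have h2 := pow_le_pow_left₀ (norm_nonneg _) h1 2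
    rw [mul_pow, norm_V_zero μ hμ, norm_mul, mul_pow, norm_pow, Complex.norm_natCast] at h2
    have e : (p:ℝ) ^ (-(j - n)) = (p:ℝ) ^ (-j) * (p:ℝ) ^ n := by
      rw [neg_sub, sub_eq_neg_add, zpow_add₀ p_pos.ne', zpow_natCast]
    rw [e] at h2
    have hpn : (0:ℝ) < (p:ℝ) ^ n := pow_pos p_pos _
    refine le_of_mul_le_mul_left ?_ hpn
    calc _ = ((p:ℝ) ^ n) ^ 2 * ‖inner ℂ (V μ j c 0) g‖ ^ 2 := by ring
      _ ≤ _ := h2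
      _ = _ := by ring
  obtain ⟨n, hn'⟩ := pow_unbounded_of_one_lt
    ((p:ℝ) ^ (-j) * ‖g‖ ^ 2 / ‖inner ℂ (V μ j c 0) g‖ ^ 2) (p_one_lt (p := p))
  rw [div_lt_iff₀ hpos] at hn'
  exact absurd (hb n) (not_le.2 hn')

/-- The family of all balls. -/
def balls (p : ℕ) [Fact p.Prime] : Set (Set ℚ_[p]) :=
  {s | ∃ (j : ℤ) (c : ℚ_[p]), s = closedBall c ((p:ℝ) ^ (-j))}

lemma balls_inter (s t : Set ℚ_[p]) (hs : s ∈ balls p) (ht : t ∈ balls p)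
    (h : (s ∩ t).Nonempty) : s ∩ t ∈ balls p := by
  obtain ⟨j, c, rfl⟩ := hs
  obtain ⟨j', c', rfl⟩ := ht
  obtain ⟨x, hx, hx'⟩ := h
  rw [IsUltrametricDist.closedBall_eq_of_mem hx, IsUltrametricDist.closedBall_eq_of_mem hx']
  rcases le_total j j' with h | h
  · rw [Set.inter_eq_right.2 (closedBall_subset_closedBall
      (zpow_le_zpow_right₀ p_one_lt.le (by omega)))]
    exact ⟨_, _, rfl⟩
  · rw [Set.inter_eq_left.2 (closedBall_subset_closedBall
      (zpow_le_zpow_right₀ p_one_lt.le (by omega)))]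
    exact ⟨_, _, rfl⟩

lemma exists_small (r : ℝ) (hr : 0 < r) : ∃ n : ℕ, (p:ℝ) ^ (-(n:ℤ)) < r := by
  obtain ⟨n, hn⟩ := pow_unbounded_of_one_lt r⁻¹ (p_one_lt (p := p))
  refine ⟨n, ?_⟩
  rw [zpow_neg, zpow_natCast]
  exact inv_lt_of_inv_lt₀ hr hn

lemma borel_balls : borel ℚ_[p] = MeasurableSpace.generateFrom (balls p) := by
  refine TopologicalSpace.IsTopologicalBasis.borel_eq_generateFrom ?_
  apply TopologicalSpace.isTopologicalBasis_of_isOpen_of_nhds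
  · rintro u ⟨j, c, rfl⟩
    exact IsUltrametricDist.isOpen_closedBall _ (r_pos _).ne'
  · intro a u ha hu
    obtain ⟨r, hr, hru⟩ := Metric.isOpen_iff.1 hu a ha
    obtain ⟨n, hn⟩ := exists_small (p := p) r hr
    exact ⟨_, ⟨n, a, rfl⟩, mem_closedBall_self (r_pos _).le,
      (closedBall_subset_ball hn).trans hru⟩

lemma zero_of_balls (μ : Measure ℚ_[p]) [μ.IsAddHaarMeasure] (g : Lp ℂ 2 μ)
    (hg : ∀ (j : ℤ) (c : ℚ_[p]), ∫ x in closedBall c ((p:ℝ) ^ (-j)), g x ∂μ = 0) : g = 0 := by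
  have hint : ∀ (j : ℤ) (c : ℚ_[p]), IntegrableOn g (closedBall c ((p:ℝ) ^ (-j))) μ :=
    fun j c => integrableOn_Lp_of_measure_ne_top g fact_one_le_two_ennreal.elim
      (isCompact_closedBall _ _).measure_lt_top.ne
  have key : ∀ (j : ℤ), ∀ᵐ x ∂(μ.restrict (closedBall (0:ℚ_[p]) ((p:ℝ) ^ (-j)))), g x = 0 := by
    intro j
    set B := closedBall (0:ℚ_[p]) ((p:ℝ) ^ (-j)) with hB
    have hI : Integrable g (μ.restrict B) := hint j 0
    have hall : ∀ s, MeasurableSet s → ∫ x in s, g x ∂(μ.restrict B) = 0 := by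
      intro s hs
      induction s, hs using MeasurableSpace.induction_on_inter (borel_balls (p := p))
        (fun s hs t ht h => balls_inter s t hs ht h) with
      | empty => simp
      | basic t ht =>
        have hm : MeasurableSet t := by
          obtain ⟨j', c', rfl⟩ := ht
          exact measurableSet_closedBall
        rw [Measure.restrict_restrict hm]
        by_cases hne : (t ∩ B).Nonempty
        · obtain ⟨j', c', h⟩ := balls_inter t B ht ⟨j, 0, rfl⟩ hne
          rw [h]; exact hg j' c'
        · rw [Set.not_nonempty_iff_eq_empty.1 hne]; simp
      | compl t ht ih =>
        have hm : MeasurableSet t := ht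
        rw [setIntegral_compl hm hI, ih, sub_zero]
        exact hg j 0
      | iUnion f hd hm ih =>
        rw [integral_iUnion (fun i => hm i) hd hI.integrableOn]
        simp [ih]
    exact hI.ae_eq_zero_of_forall_setIntegral_eq_zero (fun s hs _ => hall s hs)
  rw [Lp.eq_zero_iff_ae_eq_zero]
  have hU : (⋃ n : ℕ, closedBall (0:ℚ_[p]) ((p:ℝ) ^ (-(-(n:ℤ))))) = Set.univ := by
    rw [Set.eq_univ_iff_forall]
    intro x
    obtain ⟨n, hn⟩ := pow_unbounded_of_one_lt ‖x‖ (p_one_lt (p := p))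
    rw [Set.mem_iUnion]
    refine ⟨n, ?_⟩
    rw [neg_neg, zpow_natCast, mem_closedBall, dist_zero_right]
    exact hn.le
  have h2 : ∀ᵐ x ∂(μ.restrict (⋃ n : ℕ, closedBall (0:ℚ_[p]) ((p:ℝ) ^ (-(-(n:ℤ)))))), g x = 0 :=
    (ae_restrict_iUnion_iff _ _).2 fun n => key _
  rw [hU, Measure.restrict_univ] at h2
  exact h2

lemma coef_sq (j : ℤ) : ((p:ℝ) ^ ((j:ℝ) / 2)) * ((p:ℝ) ^ ((j:ℝ) / 2)) * (p:ℝ) ^ (-j) = 1 := by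
  rw [← Real.rpow_add p_pos, add_halves, Real.rpow_intCast, ← zpow_add₀ p_pos.ne']
  simp

end Kozyrev

/-- Kozyrev's wavelet basis: for `ν = 1,…,p−1` let
`ψ^{(ν)}(x) = χ_p((ν/p)x) Ω(|x|_p)`. Then the system
`{p^{j/2} ψ^{(ν)}(p^{−j}x − a) : j ∈ ℤ, a ∈ I_p, ν = 1,…,p−1}` is an orthonormal basis
of `L²(ℚ_p)` (`μ` the normalized Haar measure). -/
theorem padic_kozyrev_wavelet_basis
    (μ : Measure ℚ_[p]) [μ.IsAddHaarMeasure] (hμ : μ (closedBall 0 1) = 1) :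
    ∃ E : ℤ × (Ip p) × {ν : ℕ // 1 ≤ ν ∧ ν ≤ p - 1} → Lp ℂ 2 μ,
      (∀ (j : ℤ) (a : (Ip p)) (ν : {ν : ℕ // 1 ≤ ν ∧ ν ≤ p - 1}),
        ↑↑(E (j, a, ν)) =ᵐ[μ] fun x =>
          (((p : ℝ) ^ ((j : ℝ) / 2) : ℝ) : ℂ) *
            (padicChar (((ν : ℚ_[p]) / (p : ℚ_[p])) * ((p : ℚ_[p]) ^ (-j) * x - (a : ℚ_[p]))) *
              ((Omega ‖(p : ℚ_[p]) ^ (-j) * x - (a : ℚ_[p])‖ : ℝ) : ℂ))) ∧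
        Orthonormal ℂ E ∧
        (Submodule.span ℂ (Set.range E)).topologicalClosure = ⊤ := by
  have hc : ∀ j : ℤ, (((p : ℝ) ^ ((j : ℝ) / 2) : ℝ) : ℂ) ≠ 0 := fun j => by
    exact_mod_cast (Real.rpow_pos_of_pos Kozyrev.p_pos _).ne'
  have hlt : ∀ ν : {ν : ℕ // 1 ≤ ν ∧ ν ≤ p - 1}, (ν : ℕ) < p := fun ν => by
    have := ν.2; omega
  refine ⟨fun i => (((p : ℝ) ^ ((i.1 : ℝ) / 2) : ℝ) : ℂ) •
    Kozyrev.V μ i.1 ((p:ℚ_[p]) ^ i.1 * (i.2.1 : ℚ_[p])) i.2.2, ?_, ?_, ?_⟩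
  · intro j a ν
    refine (Lp.coeFn_smul _ _).trans ?_
    filter_upwards [(Kozyrev.W_memLp μ 2 j ((p:ℚ_[p]) ^ j * (a : ℚ_[p])) ν).coeFn_toLp] with x hx
    simp only [Pi.smul_apply, smul_eq_mul, Kozyrev.V]
    rw [hx]
    congr 1
    have e : (p:ℚ_[p]) ^ (-j) * (x - (p:ℚ_[p]) ^ j * (a : ℚ_[p])) =
        (p:ℚ_[p]) ^ (-j) * x - (a : ℚ_[p]) := by
      linear_combination (-(a : ℚ_[p])) * Kozyrev.scale_self (p := p) j
    have hm := Kozyrev.mem_ball_iff j ((p:ℚ_[p]) ^ j * (a : ℚ_[p])) x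
    rw [e] at hm
    unfold Kozyrev.W Omega
    by_cases h : x ∈ closedBall ((p:ℚ_[p]) ^ j * (a : ℚ_[p])) ((p:ℝ) ^ (-j))
    · rw [Set.indicator_of_mem h, Set.indicator_of_mem (by exact ⟨norm_nonneg _, hm.1 h⟩), e]
      simp
    · rw [Set.indicator_of_notMem h, Set.indicator_of_notMem (fun h' => h (hm.2 h'.2))]
      simp
  · classical
    rw [orthonormal_iff_ite]
    rintro ⟨j, a, ν⟩ ⟨j', a', ν'⟩
    simp only [inner_smul_left, inner_smul_right, Kozyrev.inner_V, Complex.conj_ofReal]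
    split_ifs with h
    · simp only [Prod.mk.injEq] at h
      obtain ⟨rfl, rfl, rfl⟩ := h
      rw [Kozyrev.W_self μ hμ, ← mul_assoc]
      exact_mod_cast Kozyrev.coef_sq j
    · by_cases h2 : j ≠ j' ∨ (ν : ℕ) ≠ ν'
      · rw [Kozyrev.W_orth μ j j' _ _ ν ν' ν.2.1 (hlt ν) ν'.2.1 (hlt ν') h2]; simp
      · push Not at h2
        obtain ⟨rfl, h3⟩ := h2
        have h3' : ν = ν' := Subtype.ext h3
        subst h3'
        have hne : (a : ℚ_[p]) ≠ a' := fun h4 => h (by rw [Subtype.ext h4])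
        have h5 := Kozyrev.W_disjoint j (a : ℚ_[p]) (a' : ℚ_[p]) a.2 a'.2 hne ν ν
        simp only [h5, integral_zero, mul_zero]
  · rw [Submodule.topologicalClosure_eq_top_iff, Submodule.eq_bot_iff]
    intro g hg
    apply Kozyrev.zero_of_balls μ g
    intro j c
    rw [← Kozyrev.inner_V_zero]
    refine Kozyrev.ball_zero μ hμ g ?_ j c
    intro j c ν h1 h2
    obtain ⟨a, ha, hac⟩ := Kozyrev.Ip_exists ((p:ℚ_[p]) ^ (-j) * c)
    obtain ⟨k, hk⟩ := Kozyrev.V_center μ j ((p:ℚ_[p]) ^ j * a) c ν (by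
      rw [← Kozyrev.norm_scale_le, ← norm_neg]
      have e : -((p:ℚ_[p]) ^ (-j) * ((p:ℚ_[p]) ^ j * a - c)) = (p:ℚ_[p]) ^ (-j) * c - a := by
        linear_combination (-a) * Kozyrev.scale_self (p := p) j
      rw [e]; exact hac)
    have h := (Submodule.mem_orthogonal _ _).1 hg _
      (Submodule.subset_span ⟨(j, ⟨a, ha⟩, ⟨ν, h1, by omega⟩), rfl⟩)
    simp only [inner_smul_left, Complex.conj_ofReal] at h
    rw [hk, inner_smul_left, (mul_eq_zero.1 h).resolve_left (hc j), mul_zero]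

end
end

section
/- (A 3-adic wavelet basis.) Define ψ^{(1)}, ψ^{(2)} : ℚ_3 → ℂ by: ψ^{(1)}(x) = −√(3/2) if |x|_3 ≤ 1/3, ψ^{(1)}(x) = √(3/2) if |x−1|_3 ≤ 1/3, ψ^{(1)}(x) = 0 if |x−2|_3 ≤ 1/3, and ψ^{(1)}(x) = 0 if |x|_3 ≥ 3; ψ^{(2)}(x) = −1/√2 if |x|_3 ≤ 1/3, ψ^{(2)}(x) = −1/√2 if |x−1|_3 ≤ 1/3, ψ^{(2)}(x) = √2 if |x−2|_3 ≤ 1/3, and ψ^{(2)}(x) = 0 if |x|_3 ≥ 3. Then the system {3^{j/2} ψ^{(ν)}(3^{−j}x − a) : j ∈ ℤ, a ∈ I_3, ν ∈ {1,2}} is an orthonormal basis of L²(ℚ_3). -/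
open MeasureTheory Metric
open scoped Classical

noncomputable section

instance fact_prime_three : Fact (Nat.Prime 3) := ⟨by norm_num⟩

/-- `I_3`: the set of `3`-adic fractional parts, i.e. numbers `a / 3^γ` with
`0 ≤ a < 3^γ` (in particular `0 ∈ I_3`). -/
def I3 : Set ℚ_[3] :=
  {x | ∃ γ a : ℕ, a < 3 ^ γ ∧ x = (a : ℚ_[3]) / (3 : ℚ_[3]) ^ γ}

instance : MeasurableSpace ℚ_[3] := borel _
instance : BorelSpace ℚ_[3] := ⟨rfl⟩

/-- The wavelet function `ψ^{(1)}`: equal to `−√(3/2)` on `{|x|_3 ≤ 1/3}`, to `√(3/2)` on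
`{|x−1|_3 ≤ 1/3}`, to `0` on `{|x−2|_3 ≤ 1/3}`, and to `0` on `{|x|_3 ≥ 3}`. -/
def psi1 : ℚ_[3] → ℂ := fun x =>
  if ‖x‖ ≤ 1 / 3 then -((Real.sqrt (3 / 2) : ℝ) : ℂ)
  else if ‖x - 1‖ ≤ 1 / 3 then ((Real.sqrt (3 / 2) : ℝ) : ℂ)
  else if ‖x - 2‖ ≤ 1 / 3 then 0
  else 0

/-- The wavelet function `ψ^{(2)}`: equal to `−1/√2` on `{|x|_3 ≤ 1/3}`, to `−1/√2` on
`{|x−1|_3 ≤ 1/3}`, to `√2` on `{|x−2|_3 ≤ 1/3}`, and to `0` on `{|x|_3 ≥ 3}`. -/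
def psi2 : ℚ_[3] → ℂ := fun x =>
  if ‖x‖ ≤ 1 / 3 then -(((Real.sqrt 2)⁻¹ : ℝ) : ℂ)
  else if ‖x - 1‖ ≤ 1 / 3 then -(((Real.sqrt 2)⁻¹ : ℝ) : ℂ)
  else if ‖x - 2‖ ≤ 1 / 3 then ((Real.sqrt 2 : ℝ) : ℂ)
  else 0

/-- The pair `(ψ^{(1)}, ψ^{(2)})` indexed by `Fin 2`. -/
def psi : Fin 2 → ℚ_[3] → ℂ := ![psi1, psi2]

/-- The ball of centre `c` and radius `3^(-n)`. -/
def wB (c : ℚ_[3]) (n : ℤ) : Set ℚ_[3] := closedBall c ((3 : ℝ) ^ (-n))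

lemma mem_wB {x c : ℚ_[3]} {n : ℤ} : x ∈ wB c n ↔ ‖x - c‖ ≤ (3 : ℝ) ^ (-n) := by
  simp [wB, dist_eq_norm]

lemma norm_three_zpow (n : ℤ) : ‖(3 : ℚ_[3]) ^ n‖ = (3 : ℝ) ^ (-n) := by
  have := Padic.norm_p_zpow (p := 3) n
  simpa using this

lemma three_pow_succ (n : ℤ) : (3 : ℝ) ^ (-(n + 1)) = (3 : ℝ) ^ (-n) * (1 / 3) := by
  rw [neg_add, zpow_add₀ (by norm_num)]; norm_num

lemma three_pow_mono {m n : ℤ} (h : n ≤ m) : (3 : ℝ) ^ (-m) ≤ (3 : ℝ) ^ (-n) :=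
  zpow_le_zpow_right₀ (by norm_num) (by omega)

lemma ultra_add {x y : ℚ_[3]} {r : ℝ} (hx : ‖x‖ ≤ r) (hy : ‖y‖ ≤ r) : ‖x + y‖ ≤ r :=
  (Padic.nonarchimedean x y).trans (max_le hx hy)

lemma ultra_sub {x y : ℚ_[3]} {r : ℝ} (hx : ‖x‖ ≤ r) (hy : ‖y‖ ≤ r) : ‖x - y‖ ≤ r := by
  rw [sub_eq_add_neg]; exact ultra_add hx (by rwa [norm_neg])

lemma wB_subset {c d : ℚ_[3]} {n m : ℤ} (hnm : n ≤ m) (h : ‖d - c‖ ≤ (3 : ℝ) ^ (-n)) :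
    wB d m ⊆ wB c n := by
  intro x hx
  rw [mem_wB] at *
  have := ultra_add (hx.trans (three_pow_mono hnm)) h
  simpa using this

lemma wB_eq {c d : ℚ_[3]} {n : ℤ} (h : ‖d - c‖ ≤ (3 : ℝ) ^ (-n)) : wB d n = wB c n :=
  (wB_subset le_rfl h).antisymm (wB_subset le_rfl (by rwa [norm_sub_rev]))

lemma wB_disj {c d : ℚ_[3]} {n m : ℤ} (hnm : n ≤ m) (h : ¬ ‖d - c‖ ≤ (3 : ℝ) ^ (-n)) :
    Disjoint (wB c n) (wB d m) := by
  rw [Set.disjoint_left]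
  intro x hx hx'
  rw [mem_wB] at *
  apply h
  have := ultra_sub hx (hx'.trans (three_pow_mono hnm))
  simpa using this

lemma digit_exists {x : ℚ_[3]} (hx : ‖x‖ ≤ 1) : ∃ i : Fin 3, ‖x - ((i : ℕ) : ℚ_[3])‖ ≤ 1 / 3 := by
  have h := PadicInt.appr_spec 1 (⟨x, hx⟩ : ℤ_[3])
  have h2 := PadicInt.appr_lt (⟨x, hx⟩ : ℤ_[3]) 1
  rw [← PadicInt.norm_le_pow_iff_mem_span_pow] at h
  refine ⟨⟨_, by simpa using h2⟩, ?_⟩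
  rw [PadicInt.norm_def] at h
  norm_num at h ⊢
  exact h

lemma digit_norm_le (i : ℕ) : ‖(i : ℚ_[3])‖ ≤ 1 := by
  simpa using Padic.norm_int_le_one (p := 3) (i : ℤ)

lemma digit_sep {i k : Fin 3} (h : ‖((i : ℕ) : ℚ_[3]) - ((k : ℕ) : ℚ_[3])‖ ≤ 1 / 3) : i = k := by
  have h2 := (Padic.norm_int_le_pow_iff_dvd (p := 3) ((i : ℕ) - (k : ℕ) : ℤ) 1).1 (by
    push_cast; norm_num at h ⊢; exact h)
  have := i.2
  have := k.2
  ext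
  norm_num at h2
  omega

lemma I3_eq {a b : ℚ_[3]} (ha : a ∈ I3) (hb : b ∈ I3) (h : ‖a - b‖ ≤ 1) : a = b := by
  obtain ⟨g, u, hu, rfl⟩ := ha
  obtain ⟨d, v, hv, rfl⟩ := hb
  have h3 : (3 : ℚ_[3]) ≠ 0 := by norm_num
  have e : ((u * 3 ^ d - v * 3 ^ g : ℤ) : ℚ_[3])
      = (u / 3 ^ g - v / 3 ^ d) * 3 ^ ((g + d : ℕ) : ℤ) := by
    rw [zpow_natCast, pow_add]; push_cast; field_simp
  have hd := (Padic.norm_int_le_pow_iff_dvd (p := 3) (u * 3 ^ d - v * 3 ^ g : ℤ) (g + d)).1 (by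
    rw [e, norm_mul, norm_three_zpow]
    push_cast
    exact mul_le_of_le_one_left (by positivity) h)
  have h0 : (u * 3 ^ d - v * 3 ^ g : ℤ) = 0 := by
    apply Int.eq_zero_of_abs_lt_dvd hd
    have h1 : (u * 3 ^ d : ℤ) < 3 ^ g * 3 ^ d := by
      have : (u : ℤ) < 3 ^ g := by exact_mod_cast hu
      gcongr
    have h2 : (v * 3 ^ g : ℤ) < 3 ^ d * 3 ^ g := by
      have : (v : ℤ) < 3 ^ d := by exact_mod_cast hv
      gcongr
    have h4 : (0 : ℤ) ≤ u * 3 ^ d := by positivity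
    have h5 : (0 : ℤ) ≤ v * 3 ^ g := by positivity
    rw [abs_lt]; push_cast; rw [pow_add]
    constructor <;> linarith
  have h6 : (u * 3 ^ d : ℚ_[3]) = v * 3 ^ g := by
    have := sub_eq_zero.1 h0
    exact_mod_cast this
  field_simp
  linear_combination h6

lemma I3_exists (y : ℚ_[3]) : ∃ a ∈ I3, ‖y - a‖ ≤ 1 := by
  obtain ⟨g, hg⟩ : ∃ g : ℕ, ‖y‖ ≤ 3 ^ g := by
    obtain ⟨g, hg⟩ := pow_unbounded_of_one_lt ‖y‖ (by norm_num : (1 : ℝ) < 3)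
    exact ⟨g, hg.le⟩
  have h3 : (3 : ℚ_[3]) ≠ 0 := by norm_num
  have hn : ‖(3 : ℚ_[3]) ^ g‖ = (3 : ℝ) ^ (-(g : ℤ)) := by
    rw [← norm_three_zpow, zpow_natCast]
  have hz : ‖y * 3 ^ g‖ ≤ 1 := by
    rw [norm_mul, hn, zpow_neg, zpow_natCast, ← div_eq_mul_inv, div_le_one (by positivity)]
    exact hg
  have h := PadicInt.appr_spec g (⟨_, hz⟩ : ℤ_[3])
  have h2 := PadicInt.appr_lt (⟨_, hz⟩ : ℤ_[3]) g
  rw [← PadicInt.norm_le_pow_iff_mem_span_pow, PadicInt.norm_def] at h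
  refine ⟨_, ⟨g, _, h2, rfl⟩, ?_⟩
  generalize PadicInt.appr (⟨_, hz⟩ : ℤ_[3]) g = u at *
  push_cast at h
  have e : y - u / 3 ^ g = (y * 3 ^ g - u) / 3 ^ g := by field_simp
  rw [e, norm_div, hn]
  exact div_le_one_of_le₀ h (by positivity)

lemma sub_norm (n : ℤ) (c x : ℚ_[3]) (i : ℕ) : ‖x - (c + 3 ^ n * i)‖ ≤ (3 : ℝ) ^ (-(n + 1)) ↔
    ‖(3 : ℚ_[3]) ^ (-n) * (x - c) - i‖ ≤ 1 / 3 := by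
  have h3 : (3 : ℚ_[3]) ≠ 0 := by norm_num
  have e : x - (c + 3 ^ n * i) = 3 ^ n * ((3 : ℚ_[3]) ^ (-n) * (x - c) - i) := by
    rw [mul_sub, ← mul_assoc, ← zpow_add₀ h3]; simp; ring
  rw [e, norm_mul, norm_three_zpow, three_pow_succ]
  exact mul_le_mul_iff_right₀ (by positivity)

lemma wB_disj_sub (c : ℚ_[3]) (n : ℤ) :
    Pairwise (Function.onFun Disjoint fun i : Fin 3 => wB (c + 3 ^ n * (i : ℕ)) (n + 1)) := by
  intro i k hik
  apply wB_disj le_rfl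
  rw [sub_norm]
  have h3 : (3 : ℚ_[3]) ≠ 0 := by norm_num
  intro h
  apply hik
  apply Eq.symm
  apply digit_sep
  rw [add_sub_cancel_left, ← mul_assoc, ← zpow_add₀ h3] at h
  simpa using h

lemma sub_center (c : ℚ_[3]) (n : ℤ) (i : ℕ) : ‖c + 3 ^ n * i - c‖ ≤ (3 : ℝ) ^ (-n) := by
  rw [add_sub_cancel_left, norm_mul, norm_three_zpow]
  exact mul_le_of_le_one_right (by positivity) (digit_norm_le i)

lemma wB_split (c : ℚ_[3]) (n : ℤ) : wB c n = ⋃ i : Fin 3, wB (c + 3 ^ n * (i : ℕ)) (n + 1) := by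
  apply Set.Subset.antisymm
  · intro x hx
    rw [mem_wB] at hx
    have : ‖(3 : ℚ_[3]) ^ (-n) * (x - c)‖ ≤ 1 := by
      rw [norm_mul, norm_three_zpow]
      calc _ ≤ (3 : ℝ) ^ (- -n) * (3 : ℝ) ^ (-n) := by gcongr
        _ = 1 := by rw [← zpow_add₀ (by norm_num)]; simp
    obtain ⟨i, hi⟩ := digit_exists this
    rw [Set.mem_iUnion]
    refine ⟨i, ?_⟩
    rw [mem_wB, sub_norm]; exact hi
  · refine Set.iUnion_subset fun i => wB_subset (by omega) (sub_center c n i)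

lemma wB_meas (c : ℚ_[3]) (n : ℤ) : MeasurableSet (wB c n) := measurableSet_closedBall

section
variable (μ : Measure ℚ_[3]) [μ.IsAddHaarMeasure]

lemma wB_ne_top (c : ℚ_[3]) (n : ℤ) : μ (wB c n) ≠ ⊤ :=
  (isCompact_closedBall c _).measure_ne_top

lemma wB_transl (c : ℚ_[3]) (n : ℤ) : μ.real (wB c n) = μ.real (wB 0 n) := by
  simp only [Measure.real, wB]
  rw [Measure.addHaar_closedBall_center]

lemma wB_measure_succ (n : ℤ) : μ.real (wB 0 n) = 3 * μ.real (wB 0 (n + 1)) := by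
  rw [wB_split, measureReal_iUnion_fintype (wB_disj_sub 0 n) (fun i => wB_meas _ _)
    (fun i => wB_ne_top _ _ _)]
  simp_rw [wB_transl μ (_ + _)]
  simp

lemma wB_measure (hμ : μ (closedBall 0 1) = 1) (c : ℚ_[3]) (n : ℤ) :
    μ.real (wB c n) = (3 : ℝ) ^ (-n) := by
  rw [wB_transl]
  induction n using Int.induction_on with
  | zero => simp [wB, Measure.real, hμ]
  | succ n ih => 
    rw [wB_measure_succ] at ih
    rw [three_pow_succ]; linarith
  | pred n ih => 
    rw [wB_measure_succ, sub_add_cancel, ih]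
    have := three_pow_succ (-(n : ℤ) - 1)
    rw [sub_add_cancel] at this
    rw [this]; ring
end

/-- Values of the wavelets on the three sub-balls of the unit ball. -/
def wM : Fin 2 → Fin 3 → ℝ :=
  ![![-√(3 / 2), √(3 / 2), 0], ![-(√2)⁻¹, -(√2)⁻¹, √2]]

lemma wM_sum (ν : Fin 2) : ∑ i, wM ν i = 0 := by
  have h : √2 * √2 = 2 := Real.mul_self_sqrt (by norm_num)
  have h0 : √2 ≠ 0 := by positivity
  fin_cases ν <;> simp [wM, Fin.sum_univ_three]
  field_simp
  linarith

lemma wM_orth (ν κ : Fin 2) : ∑ i, wM ν i * wM κ i = if ν = κ then 3 else 0 := by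
  have h : √2 * √2 = 2 := Real.mul_self_sqrt (by norm_num)
  have h' : √(3 / 2) * √(3 / 2) = 3 / 2 := Real.mul_self_sqrt (by norm_num)
  have h2 : (√2)⁻¹ * (√2)⁻¹ = 1 / 2 := by rw [← mul_inv, h]; norm_num
  fin_cases ν <;> fin_cases κ <;>
    simp only [wM, Fin.sum_univ_three, Fin.isValue, Matrix.cons_val_zero, Matrix.cons_val_one,
      Matrix.cons_val, Fin.zero_eta, Fin.mk_one] <;>
    generalize √(3 / 2) = s at * <;> generalize (√2)⁻¹ = r at * <;> norm_num <;> linarith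

lemma psi_eq (ν : Fin 2) (x : ℚ_[3]) :
    psi ν x = ∑ i : Fin 3, (wM ν i : ℂ) * (if ‖x - ((i : ℕ) : ℚ_[3])‖ ≤ 1 / 3 then 1 else 0) := by
  have key : ∀ i k : Fin 3, ‖x - ((i : ℕ) : ℚ_[3])‖ ≤ 1 / 3 → ‖x - ((k : ℕ) : ℚ_[3])‖ ≤ 1 / 3 →
      i = k := by
    intro i k hi hk
    apply digit_sep
    have := ultra_sub hk hi
    simpa using this
  have k01 : ‖x‖ ≤ 1 / 3 → ‖x - 1‖ ≤ 1 / 3 → False := fun u v =>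
    absurd (key 0 1 (by simpa using u) (by simpa using v)) (by decide)
  have k02 : ‖x‖ ≤ 1 / 3 → ‖x - 2‖ ≤ 1 / 3 → False := fun u v =>
    absurd (key 0 2 (by simpa using u) (by simpa using v)) (by decide)
  have k12 : ‖x - 1‖ ≤ 1 / 3 → ‖x - 2‖ ≤ 1 / 3 → False := fun u v =>
    absurd (key 1 2 (by simpa using u) (by simpa using v)) (by decide)
  clear key
  rw [Fin.sum_univ_three]
  simp only [Fin.coe_ofNat_eq_mod, Nat.zero_mod, Nat.one_mod, Nat.mod_succ, Nat.cast_zero,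
    Nat.cast_one, Nat.cast_ofNat, sub_zero]
  fin_cases ν
  · simp only [psi, psi1, wM, Matrix.cons_val_zero, Fin.zero_eta, Matrix.cons_val_one, Matrix.cons_val]
    split_ifs <;> first | (exfalso; tauto) | simp
  · simp only [psi, psi2, wM, Matrix.cons_val_zero, Fin.mk_one, Matrix.cons_val_one, Matrix.cons_val]
    split_ifs <;> first | (exfalso; tauto) | simp

section
variable (μ : Measure ℚ_[3]) [μ.IsAddHaarMeasure]

/-- Indicator of a ball as an element of `L²`. -/
def wI (c : ℚ_[3]) (n : ℤ) : Lp ℂ 2 μ :=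
  indicatorConstLp 2 (wB_meas c n) (wB_ne_top μ c n) (1 : ℂ)

/-- The wavelets as elements of `L²`. -/
def wE (p : ℤ × I3 × Fin 2) : Lp ℂ 2 μ :=
  (((3 : ℝ) ^ ((p.1 : ℝ) / 2) : ℝ) : ℂ) • ∑ i : Fin 3,
    (wM p.2.2 i : ℂ) • wI μ (3 ^ p.1 * (p.2.1 : ℚ_[3]) + 3 ^ p.1 * ((i : ℕ) : ℚ_[3])) (p.1 + 1)

lemma wI_coe (c : ℚ_[3]) (n : ℤ) :
    wI μ c n =ᵐ[μ] fun x => if ‖x - c‖ ≤ (3 : ℝ) ^ (-n) then 1 else 0 := by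
  filter_upwards [indicatorConstLp_coeFn (p := 2) (hs := wB_meas c n) (hμs := wB_ne_top μ c n)
    (c := (1 : ℂ))] with x hx
  rw [wI, hx]
  simp [Set.indicator_apply, mem_wB]

lemma wE_coe (j : ℤ) (a : I3) (ν : Fin 2) :
    wE μ (j, a, ν) =ᵐ[μ] fun x =>
      (((3 : ℝ) ^ ((j : ℝ) / 2) : ℝ) : ℂ) * psi ν ((3 : ℚ_[3]) ^ (-j) * x - (a : ℚ_[3])) := by
  unfold wE
  have H := fun i : Fin 3 => wI_coe μ (3 ^ j * (a : ℚ_[3]) + 3 ^ j * ((i : ℕ) : ℚ_[3])) (j + 1)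
  have H2 := fun i : Fin 3 => Lp.coeFn_smul (wM ν i : ℂ)
    (wI μ (3 ^ j * (a : ℚ_[3]) + 3 ^ j * ((i : ℕ) : ℚ_[3])) (j + 1))
  simp only [Fin.sum_univ_three]
  filter_upwards [H 0, H 1, H 2, H2 0, H2 1, H2 2, Lp.coeFn_smul (((3 : ℝ) ^ ((j : ℝ) / 2) : ℝ) : ℂ)
    ((wM ν 0 : ℂ) • wI μ (3 ^ j * (a : ℚ_[3]) + 3 ^ j * (((0 : Fin 3) : ℕ) : ℚ_[3])) (j + 1)
      + (wM ν 1 : ℂ) • wI μ (3 ^ j * (a : ℚ_[3]) + 3 ^ j * (((1 : Fin 3) : ℕ) : ℚ_[3])) (j + 1)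
      + (wM ν 2 : ℂ) • wI μ (3 ^ j * (a : ℚ_[3]) + 3 ^ j * (((2 : Fin 3) : ℕ) : ℚ_[3])) (j + 1)),
    Lp.coeFn_add
    ((wM ν 0 : ℂ) • wI μ (3 ^ j * (a : ℚ_[3]) + 3 ^ j * (((0 : Fin 3) : ℕ) : ℚ_[3])) (j + 1)
      + (wM ν 1 : ℂ) • wI μ (3 ^ j * (a : ℚ_[3]) + 3 ^ j * (((1 : Fin 3) : ℕ) : ℚ_[3])) (j + 1))
      ((wM ν 2 : ℂ) • wI μ (3 ^ j * (a : ℚ_[3]) + 3 ^ j * (((2 : Fin 3) : ℕ) : ℚ_[3])) (j + 1)),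
    Lp.coeFn_add
    ((wM ν 0 : ℂ) • wI μ (3 ^ j * (a : ℚ_[3]) + 3 ^ j * (((0 : Fin 3) : ℕ) : ℚ_[3])) (j + 1))
      ((wM ν 1 : ℂ) • wI μ (3 ^ j * (a : ℚ_[3]) + 3 ^ j * (((1 : Fin 3) : ℕ) : ℚ_[3])) (j + 1))]
    with x h0 h1 h2 g0 g1 g2 e1 e2 e3
  have h3 : (3 : ℚ_[3]) ≠ 0 := by norm_num
  have e : (3 : ℚ_[3]) ^ (-j) * x - (a : ℚ_[3]) = 3 ^ (-j) * (x - 3 ^ j * a) := by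
    rw [mul_sub, ← mul_assoc, ← zpow_add₀ h3]; simp
  rw [e1, Pi.smul_apply, e2, Pi.add_apply, e3, Pi.add_apply, g0, g1, g2, Pi.smul_apply,
    Pi.smul_apply, Pi.smul_apply, h0, h1, h2, psi_eq, Fin.sum_univ_three, e]
  simp only [sub_norm, smul_eq_mul]

lemma inner_wI (c d : ℚ_[3]) (n m : ℤ) :
    inner ℂ (wI μ c n) (wI μ d m) = ((μ.real (wB c n ∩ wB d m) : ℝ) : ℂ) :=
  L2.inner_indicatorConstLp_one_indicatorConstLp_one (𝕜 := ℂ) _ _ _ _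

lemma inner_wI_wE (c : ℚ_[3]) (n : ℤ) (p : ℤ × I3 × Fin 2) (h : n ≤ p.1)
    (hμ : μ (closedBall 0 1) = 1) :
    inner ℂ (wI μ c n) (wE μ p) = 0 := by
  obtain ⟨t, ht⟩ : ∃ t : ℂ, ∀ i : Fin 3, inner ℂ (wI μ c n)
      (wI μ (3 ^ p.1 * (p.2.1 : ℚ_[3]) + 3 ^ p.1 * ((i : ℕ) : ℚ_[3])) (p.1 + 1)) = t := by
    set d := 3 ^ p.1 * (p.2.1 : ℚ_[3])
    simp only [inner_wI]
    by_cases hd : ‖d - c‖ ≤ (3 : ℝ) ^ (-n)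
    · refine ⟨((3 : ℝ) ^ (-(p.1 + 1)) : ℝ), fun i => ?_⟩
      rw [Set.inter_eq_self_of_subset_right, wB_measure μ hμ]
      exact (wB_subset (by omega) (sub_center d p.1 i)).trans (wB_subset h hd)
    · refine ⟨0, fun i => ?_⟩
      rw [Set.disjoint_iff_inter_eq_empty.1]
      · simp
      · exact (wB_disj h hd).mono_right (wB_subset (by omega) (sub_center d p.1 i))
  unfold wE
  rw [inner_smul_right, inner_sum]
  simp only [inner_smul_right, ht]
  rw [← Finset.sum_mul]
  have := wM_sum p.2.2
  have h2 : ∑ i, (wM p.2.2 i : ℂ) = 0 := by exact_mod_cast this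
  rw [h2]; simp

lemma inner_wE_lt (p q : ℤ × I3 × Fin 2) (h : p.1 < q.1) (hμ : μ (closedBall 0 1) = 1) :
    inner ℂ (wE μ p) (wE μ q) = 0 := by
  nth_rw 1 [wE]
  rw [inner_smul_left, sum_inner]
  simp only [inner_smul_left]
  rw [Finset.sum_eq_zero, mul_zero]
  intro i _
  rw [inner_wI_wE μ _ _ _ (by omega) hμ, mul_zero]

lemma inner_wE_same (j : ℤ) (a b : I3) (ν κ : Fin 2) (hμ : μ (closedBall 0 1) = 1) :
    inner ℂ (wE μ (j, a, ν)) (wE μ (j, b, κ)) = if (a, ν) = (b, κ) then 1 else 0 := by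
  unfold wE
  simp only [inner_smul_left, inner_smul_right, sum_inner, inner_sum, inner_wI, Complex.conj_ofReal]
  by_cases hab : a = b
  · subst hab
    have h1 : ∀ i k : Fin 3, μ.real (wB (3 ^ j * (a : ℚ_[3]) + 3 ^ j * ((i : ℕ) : ℚ_[3])) (j + 1) ∩
        wB (3 ^ j * (a : ℚ_[3]) + 3 ^ j * ((k : ℕ) : ℚ_[3])) (j + 1)) =
        if i = k then (3 : ℝ) ^ (-(j + 1)) else 0 := by
      intro i k
      split_ifs with h
      · subst h; rw [Set.inter_self, wB_measure μ hμ]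
      · have := wB_disj_sub (3 ^ j * (a : ℚ_[3])) j h
        rw [Set.disjoint_iff_inter_eq_empty.1 this]; simp
    have h2 := wM_orth ν κ
    have h3 : (3 : ℝ) ^ ((j : ℝ) / 2) * (3 : ℝ) ^ ((j : ℝ) / 2) * (3 : ℝ) ^ (-(j + 1)) * 3 = 1 := by
      rw [← Real.rpow_add (by norm_num), add_halves, Real.rpow_intCast,
        ← zpow_add₀ (by norm_num)]
      norm_num
    simp only [h1]
    generalize (3 : ℝ) ^ ((j : ℝ) / 2) = s at *
    norm_cast
    simp only [mul_ite, mul_zero, Finset.sum_ite_eq', Finset.mem_univ, if_true]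
    have h4 : ∀ i, wM κ i * (s * (wM ν i * (3 : ℝ) ^ (-(j + 1)))) =
      wM ν i * wM κ i * (s * (3 : ℝ) ^ (-(j + 1))) := fun i => by ring
    simp only [h4, ← Finset.sum_mul]
    rw [h2]
    by_cases hv : ν = κ
    · simp only [hv, if_true]
      norm_cast
      linarith
    · simp [hv]
  · have h1 : ∀ i k : Fin 3, μ.real (wB (3 ^ j * (a : ℚ_[3]) + 3 ^ j * ((i : ℕ) : ℚ_[3])) (j + 1) ∩
        wB (3 ^ j * (b : ℚ_[3]) + 3 ^ j * ((k : ℕ) : ℚ_[3])) (j + 1)) = 0 := by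
      intro i k
      have : Disjoint (wB (3 ^ j * (a : ℚ_[3])) j) (wB (3 ^ j * (b : ℚ_[3])) j) := by
        apply wB_disj le_rfl
        intro h
        apply hab
        apply Eq.symm
        apply Subtype.ext
        apply I3_eq b.2 a.2
        rw [← mul_sub, norm_mul, norm_three_zpow] at h
        exact le_of_mul_le_mul_left (by simpa using h) (by positivity : (0 : ℝ) < 3 ^ (-j))
      rw [Set.disjoint_iff_inter_eq_empty.1 ((this.mono_left
        (wB_subset (by omega) (sub_center _ j i))).mono_right
        (wB_subset (by omega) (sub_center _ j k)))]
      simp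
    simp [h1, hab]

lemma wE_orthonormal (hμ : μ (closedBall 0 1) = 1) : Orthonormal ℂ (wE μ) := by
  rw [orthonormal_iff_ite]
  rintro ⟨j, a, ν⟩ ⟨k, b, κ⟩
  rcases lt_trichotomy j k with h | h | h
  · rw [inner_wE_lt μ _ _ h hμ, if_neg]
    rintro ⟨⟩; exact lt_irrefl _ h
  · subst h
    rw [inner_wE_same μ _ _ _ _ _ hμ]
    simp
  · rw [← inner_conj_symm, inner_wE_lt μ _ _ h hμ, if_neg]
    · simp
    · rintro ⟨⟩; exact lt_irrefl _ h

lemma wI_split (c : ℚ_[3]) (n : ℤ) (f : Lp ℂ 2 μ) :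
    inner ℂ (wI μ c n) f = ∑ i : Fin 3, inner ℂ (wI μ (c + 3 ^ n * ((i : ℕ) : ℚ_[3])) (n + 1)) f := by
  unfold wI
  simp only [L2.inner_indicatorConstLp_one]
  rw [← integral_iUnion_fintype (fun i => wB_meas _ _) (wB_disj_sub c n)
    (fun i => integrableOn_Lp_of_measure_ne_top f fact_one_le_two_ennreal.elim (wB_ne_top μ _ _)),
    ← wB_split]

lemma wI_congr {c d : ℚ_[3]} {n : ℤ} (h : ‖d - c‖ ≤ (3 : ℝ) ^ (-n)) : wI μ d n = wI μ c n := by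
  unfold wI
  congr 1
  exact wB_eq h

lemma alg_aux (x y z : ℂ) (h1 : -((√(3 / 2) : ℝ) : ℂ) * x + ((√(3 / 2) : ℝ) : ℂ) * y = 0)
    (h2 : -(((√2)⁻¹ : ℝ) : ℂ) * x + -(((√2)⁻¹ : ℝ) : ℂ) * y + ((√2 : ℝ) : ℂ) * z = 0) :
    x = y ∧ x = z := by
  have a1 : ((√(3 / 2) : ℝ) : ℂ) ≠ 0 := by
    norm_cast; positivity
  have a2 : ((√2 : ℝ) : ℂ) ≠ 0 := by
    norm_cast; positivity
  have a3 : ((√2 : ℝ) : ℂ) * ((√2 : ℝ) : ℂ) = 2 := by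
    norm_cast; exact Real.mul_self_sqrt (by norm_num)
  have e1 : x = y := by
    apply mul_left_cancel₀ a1; linear_combination -h1
  refine ⟨e1, ?_⟩
  subst e1
  push_cast at h2
  field_simp at h2
  linear_combination (-1 / 2) * h2 + (z / 2) * a3

lemma wI_third (f : Lp ℂ 2 μ) (hf : ∀ p, inner ℂ (wE μ p) f = 0) (c : ℚ_[3]) (n : ℤ) :
    inner ℂ (wI μ c n) f = 3 * inner ℂ (wI μ c (n + 1)) f := by
  have h3 : (3 : ℚ_[3]) ≠ 0 := by norm_num
  obtain ⟨a, ha, hac⟩ := I3_exists ((3 : ℚ_[3]) ^ (-n) * c)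
  have hc : ‖c - 3 ^ n * a‖ ≤ (3 : ℝ) ^ (-n) := by
    have e : c - 3 ^ n * a = 3 ^ n * (3 ^ (-n) * c - a) := by
      rw [mul_sub, ← mul_assoc, ← zpow_add₀ h3]; simp
    rw [e, norm_mul, norm_three_zpow]
    exact mul_le_of_le_one_right (by positivity) hac
  have hmem : c ∈ wB (3 ^ n * a) n := mem_wB.2 hc
  rw [wB_split, Set.mem_iUnion] at hmem
  obtain ⟨k, hk⟩ := hmem
  rw [wI_congr μ hc, wI_split, wI_congr μ (mem_wB.1 hk)]
  have hpos : (((3 : ℝ) ^ ((n : ℝ) / 2) : ℝ) : ℂ) ≠ 0 := by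
    norm_cast; positivity
  have key : ∀ ν : Fin 2, ∑ i : Fin 3, (wM ν i : ℂ) *
      inner ℂ (wI μ (3 ^ n * a + 3 ^ n * ((i : ℕ) : ℚ_[3])) (n + 1)) f = 0 := by
    intro ν
    have := hf (n, ⟨a, ha⟩, ν)
    unfold wE at this
    simp only [inner_smul_left, sum_inner, Complex.conj_ofReal] at this
    exact (mul_eq_zero.1 this).resolve_left hpos
  generalize hF : (fun i : Fin 3 => 
    inner ℂ (wI μ (3 ^ n * a + 3 ^ n * ((i : ℕ) : ℚ_[3])) (n + 1)) f) = F
  have hF' : ∀ i : Fin 3, 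
    inner ℂ (wI μ (3 ^ n * a + 3 ^ n * ((i : ℕ) : ℚ_[3])) (n + 1)) f = F i := fun i => by rw [← hF]
  simp only [hF'] at key ⊢
  have k0 := key 0
  have k1 := key 1
  rw [Fin.sum_univ_three] at k0 k1 ⊢
  obtain ⟨e1, e2⟩ := alg_aux (F 0) (F 1) (F 2) (by simpa [wM] using k0) (by simpa [wM] using k1)
  fin_cases k <;> simp [← e1, ← e2] <;> ring

lemma norm_wI (hμ : μ (closedBall 0 1) = 1) (c : ℚ_[3]) (n : ℤ) :
    ‖wI μ c n‖ ^ 2 = (3 : ℝ) ^ (-n) := by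
  have := inner_wI μ c c n n
  rw [inner_self_eq_norm_sq_to_K, Set.inter_self, wB_measure μ hμ] at this
  apply Complex.ofReal_injective
  rw [← this]; simp

lemma wI_zero (hμ : μ (closedBall 0 1) = 1) (f : Lp ℂ 2 μ) (hf : ∀ p, inner ℂ (wE μ p) f = 0)
    (c : ℚ_[3]) (n : ℤ) : inner ℂ (wI μ c n) f = 0 := by
  have h1 : ∀ k : ℕ, inner ℂ (wI μ c (n - k)) f = 3 ^ k * inner ℂ (wI μ c n) f := by
    intro k
    induction k with
    | zero => simp
    | succ k ih =>
      rw [wI_third μ f hf]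
      push_cast
      rw [show n - (k + 1 : ℤ) + 1 = n - k by ring, ih]; ring
  set t := ‖inner ℂ (wI μ c n) f‖ with ht
  have h2 : ∀ k : ℕ, (3 : ℝ) ^ k * t ^ 2 ≤ (3 : ℝ) ^ (-n) * ‖f‖ ^ 2 := by
    intro k
    have a := norm_inner_le_norm (𝕜 := ℂ) (wI μ c (n - k)) f
    rw [h1 k, norm_mul, ← ht, norm_pow] at a
    have b : ((3 : ℝ) ^ k * t) ^ 2 ≤ (‖wI μ c (n - k)‖ * ‖f‖) ^ 2 := by
      apply pow_le_pow_left₀ (by positivity)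
      simpa using a
    rw [mul_pow, mul_pow, norm_wI μ hμ, show -(n - (k : ℤ)) = -n + k by ring,
      zpow_add₀ (by norm_num), zpow_natCast] at b
    have h3 : (0 : ℝ) < 3 ^ k := by positivity
    apply le_of_mul_le_mul_left _ h3
    nlinarith
  by_contra hne
  have htpos : 0 < t ^ 2 := by
    have : 0 < t := norm_pos_iff.2 hne
    positivity
  obtain ⟨k, hk⟩ := pow_unbounded_of_one_lt ((3 : ℝ) ^ (-n) * ‖f‖ ^ 2 / t ^ 2)
    (by norm_num : (1 : ℝ) < 3)
  rw [div_lt_iff₀ htpos] at hk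
  exact absurd (h2 k) (not_le.2 hk)

lemma wDoubling (hμ : μ (closedBall 0 1) = 1) : IsUnifLocDoublingMeasure μ := by
  refine ⟨9, ?_⟩
  filter_upwards [self_mem_nhdsWithin] with ε hε x
  obtain ⟨n, hn1, hn2⟩ := exists_mem_Ico_zpow (y := (3 : ℝ)) (show (0 : ℝ) < ε from hε) (by norm_num)
  have s1 : closedBall x (2 * ε) ⊆ wB x (-n - 2) := by
    apply closedBall_subset_closedBall
    rw [show -(-n - 2) = n + 1 + 1 by ring, zpow_add_one₀ (by norm_num)]
    linarith [hε.out]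
  have s2 : wB x (-n) ⊆ closedBall x ε := by
    apply closedBall_subset_closedBall
    simpa using hn1
  have e : μ (wB x (-n - 2)) = 9 * μ (wB x (-n)) := by
    rw [← ENNReal.toReal_eq_toReal_iff' (wB_ne_top μ _ _)
      (ENNReal.mul_ne_top (by norm_num) (wB_ne_top μ _ _)), ENNReal.toReal_mul]
    change μ.real _ = _ * μ.real _
    rw [wB_measure μ hμ, wB_measure μ hμ, show -(-n - 2) = n + 2 by ring, neg_neg,
      zpow_add₀ (by norm_num)]
    norm_num; ring
  calc _ ≤ _ := measure_mono s1
    _ = _ := e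
    _ ≤ _ := by push_cast; gcongr

lemma wComplete (hμ : μ (closedBall 0 1) = 1) (f : Lp ℂ 2 μ)
    (hf : ∀ p, inner ℂ (wE μ p) f = 0) : f = 0 := by
  have := wDoubling μ hμ
  have hz : ∀ c n, ∫ x in wB c n, f x ∂μ = 0 := by
    intro c n
    rw [← L2.inner_indicatorConstLp_one (wB_meas c n) (wB_ne_top μ c n)]
    exact wI_zero μ hμ f hf c n
  have hloc : LocallyIntegrable f μ := (Lp.memLp f).locallyIntegrable (by norm_num)
  rw [Lp.eq_zero_iff_ae_eq_zero]
  filter_upwards [IsUnifLocDoublingMeasure.ae_tendsto_average μ hloc 1] with x hx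
  have h := @hx ℕ Filter.atTop (fun _ => x) (fun n => (3 : ℝ) ^ (-(n : ℤ))) (by
    rw [tendsto_nhdsWithin_iff]
    constructor
    · have := tendsto_pow_atTop_nhds_zero_of_lt_one (r := (1 / 3 : ℝ)) (by norm_num) (by norm_num)
      simpa using this
    · exact Filter.Eventually.of_forall fun n => by
        change (0 : ℝ) < _; positivity) (Filter.Eventually.of_forall fun n => by
          apply mem_closedBall_self; positivity)
  have h0 : ∀ n : ℕ, ⨍ y in closedBall x ((3 : ℝ) ^ (-(n : ℤ))), f y ∂μ = 0 := by
    intro n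
    rw [setAverage_eq]
    have := hz x n
    rw [wB] at this
    rw [this, smul_zero]
  simp only [h0] at h
  exact tendsto_nhds_unique h tendsto_const_nhds
end

/-- A `3`-adic wavelet basis: the system
`{3^{j/2} ψ^{(ν)}(3^{−j}x − a) : j ∈ ℤ, a ∈ I_3, ν ∈ {1,2}}` is an orthonormal basis
of `L²(ℚ_3)` (`μ` the normalized Haar measure). -/
theorem padic_3adic_wavelet_basis
    (μ : Measure ℚ_[3]) [μ.IsAddHaarMeasure] (hμ : μ (closedBall 0 1) = 1) :
    ∃ E : ℤ × I3 × Fin 2 → Lp ℂ 2 μ,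
      (∀ (j : ℤ) (a : I3) (ν : Fin 2),
        ↑↑(E (j, a, ν)) =ᵐ[μ] fun x =>
          (((3 : ℝ) ^ ((j : ℝ) / 2) : ℝ) : ℂ) * psi ν ((3 : ℚ_[3]) ^ (-j) * x - (a : ℚ_[3]))) ∧
        Orthonormal ℂ E ∧
        (Submodule.span ℂ (Set.range E)).topologicalClosure = ⊤ := by
  refine ⟨wE μ, wE_coe μ, wE_orthonormal μ hμ, ?_⟩
  rw [Submodule.topologicalClosure_eq_top_iff, Submodule.eq_bot_iff]
  intro f hf
  apply wComplete μ hμ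
  intro p
  exact (Submodule.mem_orthogonal _ _).1 hf _ (Submodule.subset_span ⟨p, rfl⟩)

end
end
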